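/- Let α and β be real numbers with 0 < α < 1 and 0 < β < 1, and let x be a complex number with Re(x) > 0 such that none of the six numbers (x+α)/2, (x−α−β+1)/2, (x+β)/2, (x−α+2)/2, (x+α+β+1)/2, (x−β+2)/2 is a nonpositive integer. Define, for m ≥ 0, q_m = (4m²+α−α²+β−β²−αβ)/2 + αβ(−1+α+β)/(2(2m−1)(2m+1)), and for m ≥ 1, p_m = −(2m−α−β)(2m−2+α+β)((2m−1)²−α²)((2m−1)²−β²)/(16(2m−1)²). Then the continued fraction (x²+q_0)/2 + K_{m=1}^∞(p_m/(x²+q_m)) converges to a nonzero value v, and Γ((x+α)/2)·Γ((x−α−β+1)/2)·Γ((x+β)/2) / [Γ((x−α+2)/2)·Γ((x+α+β+1)/2)·Γ((x−β+2)/2)] = 2/v. -/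

import Mathlib

open Filter

noncomputable def cfA (a b : ℕ → ℂ) : ℕ → ℂ
  | 0 => 1
  | 1 => b 0
  | n + 2 => b (n + 1) * cfA a b (n + 1) + a (n + 1) * cfA a b n

noncomputable def cfB (a b : ℕ → ℂ) : ℕ → ℂ
  | 0 => 0
  | 1 => 1
  | n + 2 => b (n + 1) * cfB a b (n + 1) + a (n + 1) * cfB a b n

/-- The continued fraction `b 0 + K_{n=1}^∞ (a n / b n)` converges to `v`. -/
def CFConvergesTo (a b : ℕ → ℂ) (v : ℂ) : Prop :=
  (∀ᶠ n in atTop, cfB a b n ≠ 0) ∧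
    Tendsto (fun n => cfA a b n / cfB a b n) atTop (nhds v)

/-- `p_m = −(2m−α−β)(2m−2+α+β)((2m−1)²−α²)((2m−1)²−β²)/(16(2m−1)²)` for `m ≥ 1`. -/
noncomputable def aSeq (α β : ℝ) : ℕ → ℂ := fun m =>
  -((2 * (m : ℂ) - α - β) * (2 * (m : ℂ) - 2 + α + β) *
      ((2 * (m : ℂ) - 1) ^ 2 - (α : ℂ) ^ 2) * ((2 * (m : ℂ) - 1) ^ 2 - (β : ℂ) ^ 2)) /
    (16 * (2 * (m : ℂ) - 1) ^ 2)

/-- `q_m = (4m²+α−α²+β−β²−αβ)/2 + αβ(−1+α+β)/(2(2m−1)(2m+1))`. -/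
noncomputable def qSeq (α β : ℝ) : ℕ → ℂ := fun m =>
  (4 * (m : ℂ) ^ 2 + α - (α : ℂ) ^ 2 + β - (β : ℂ) ^ 2 - (α : ℂ) * β) / 2 +
    (α : ℂ) * β * (-1 + α + β) / (2 * (2 * (m : ℂ) - 1) * (2 * (m : ℂ) + 1))

/-- Partial denominators: `b_0 = (x²+q_0)/2`, `b_m = x²+q_m` for `m ≥ 1`. -/
noncomputable def bSeq (α β : ℝ) (x : ℂ) : ℕ → ℂ := fun m =>
  if m = 0 then (x ^ 2 + qSeq α β 0) / 2 else x ^ 2 + qSeq α β m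


namespace CFProof

noncomputable def dS (x B e : ℂ) (m : ℕ) : ℂ :=
  ((2 * (m : ℂ) + 1) ^ 2 + (1 + 2 * x) * (2 * (m : ℂ) + 1) + B - e / (2 * (m : ℂ) + 1)) / 4

noncomputable def rS (x B e : ℂ) (m : ℕ) : ℂ :=
  ((2 * (m : ℂ) + 1) ^ 2 - (1 + 2 * x) * (2 * (m : ℂ) + 1) + B + e / (2 * (m : ℂ) + 1)) / 4

lemma n_ne (m : ℕ) : (2 * (m : ℂ) + 1) ≠ 0 := by exact_mod_cast (by omega : 2 * m + 1 ≠ 0)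

lemma norm_n (m : ℕ) : ‖(2 * (m : ℂ) + 1)‖ = 2 * (m : ℝ) + 1 := by
  have : (2 * (m : ℂ) + 1) = ((2 * (m : ℝ) + 1 : ℝ) : ℂ) := by push_cast; ring
  rw [this, Complex.norm_real, Real.norm_of_nonneg (by positivity)]

lemma norm_e_div (e : ℂ) (m : ℕ) : ‖e / (2 * (m : ℂ) + 1)‖ ≤ ‖e‖ := by
  rw [norm_div, norm_n]
  apply div_le_self (norm_nonneg _)
  have : (0:ℝ) ≤ m := by positivity
  linarith

lemma d_lower (x B e : ℂ) (m : ℕ) :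
    (2 * (m : ℝ) + 1) ^ 2 + (1 + 2 * x.re) * (2 * (m : ℝ) + 1) - (‖B‖ + ‖e‖)
      ≤ 4 * ‖dS x B e m‖ := by
  have h1 : 4 * ‖dS x B e m‖ = ‖(2 * (m : ℂ) + 1) ^ 2 + (1 + 2 * x) * (2 * (m : ℂ) + 1)
      + (B - e / (2 * (m : ℂ) + 1))‖ := by
    unfold dS
    rw [norm_div, Complex.norm_ofNat, ← add_sub_assoc]
    ring
  rw [h1]
  have h2 := norm_sub_le_norm_add ((2 * (m : ℂ) + 1) ^ 2 + (1 + 2 * x) * (2 * (m : ℂ) + 1))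
    (B - e / (2 * (m : ℂ) + 1))
  have h3 : ‖B - e / (2 * (m : ℂ) + 1)‖ ≤ ‖B‖ + ‖e‖ :=
    (norm_sub_le _ _).trans (by linarith [norm_e_div e m])
  have h4 := Complex.re_le_norm ((2 * (m : ℂ) + 1) ^ 2 + (1 + 2 * x) * (2 * (m : ℂ) + 1))
  have h5 : ((2 * (m : ℂ) + 1) ^ 2 + (1 + 2 * x) * (2 * (m : ℂ) + 1)).re =
      (2 * (m : ℝ) + 1) ^ 2 + (1 + 2 * x.re) * (2 * (m : ℝ) + 1) := by
    simp [pow_two]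
  linarith

lemma r_upper (x B e : ℂ) (hx : 0 < x.re) (m : ℕ) (hm : 2 * (1 + 2 * x.re) ≤ 2 * (m : ℝ) + 1) :
    4 * ‖rS x B e m‖ ≤ (2 * (m : ℝ) + 1) ^ 2 - (1 + 2 * x.re) * (2 * (m : ℝ) + 1)
      + (4 * x.im ^ 2 + ‖B‖ + ‖e‖) := by
  have h1 : 4 * ‖rS x B e m‖ = ‖((2 * (m : ℂ) + 1) ^ 2 - (1 + 2 * x) * (2 * (m : ℂ) + 1))
      + (B + e / (2 * (m : ℂ) + 1))‖ := by
    unfold rS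
    rw [norm_div, Complex.norm_ofNat, ← add_assoc]
    ring
  rw [h1]
  have h2 := norm_add_le ((2 * (m : ℂ) + 1) ^ 2 - (1 + 2 * x) * (2 * (m : ℂ) + 1))
    (B + e / (2 * (m : ℂ) + 1))
  have h3 : ‖B + e / (2 * (m : ℂ) + 1)‖ ≤ ‖B‖ + ‖e‖ :=
    (norm_add_le _ _).trans (by linarith [norm_e_div e m])
  have h5 : ((2 * (m : ℂ) + 1) ^ 2 - (1 + 2 * x) * (2 * (m : ℂ) + 1)).re =
      (2 * (m : ℝ) + 1) ^ 2 - (1 + 2 * x.re) * (2 * (m : ℝ) + 1) := by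
    simp [pow_two]
  have h6 : ((2 * (m : ℂ) + 1) ^ 2 - (1 + 2 * x) * (2 * (m : ℂ) + 1)).im =
      - (2 * x.im * (2 * (m : ℝ) + 1)) := by
    simp [pow_two]
  set n : ℝ := 2 * (m : ℝ) + 1
  set R : ℝ := n ^ 2 - (1 + 2 * x.re) * n with hR
  have hn : 0 < n := by linarith
  have hRn : n ^ 2 / 2 ≤ R := by rw [hR]; nlinarith
  have h7 : ‖((2 * (m : ℂ) + 1) ^ 2 - (1 + 2 * x) * (2 * (m : ℂ) + 1))‖ ≤ R + 4 * x.im ^ 2 := by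
    have hR0 : 0 ≤ R := le_trans (by positivity) hRn
    refine (pow_le_pow_iff_left₀ (norm_nonneg _) (by positivity) two_ne_zero).1 ?_
    rw [Complex.sq_norm, Complex.normSq_apply, h5, h6]
    nlinarith [mul_le_mul_of_nonneg_left hRn (sq_nonneg x.im), sq_nonneg (x.im ^ 2)]
  linarith

lemma a_upper (x B e lam : ℂ) : ∃ C : ℝ, 0 ≤ C ∧ ∀ m : ℕ,
    16 * ‖lam - dS x B e m * rS x B e m‖ ≤ (2 * (m : ℝ) + 1) ^ 4 + C * (2 * (m : ℝ) + 1) ^ 2 := by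
  refine ⟨2 * ‖B‖ + ‖B‖ ^ 2 + (‖1 + 2 * x‖ + ‖e‖) ^ 2 + 16 * ‖lam‖, by positivity, fun m => ?_⟩
  have hn := n_ne m
  have h1 : 16 * ‖lam - dS x B e m * rS x B e m‖ =
      ‖16 * lam - (((2 * (m : ℂ) + 1) ^ 2 + B) ^ 2 -
        ((1 + 2 * x) * (2 * (m : ℂ) + 1) - e / (2 * (m : ℂ) + 1)) ^ 2)‖ := by
    rw [show (16 : ℝ) = ‖(16 : ℂ)‖ by simp, ← norm_mul]
    congr 1
    unfold dS rS
    ring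
  rw [h1]
  have hN := norm_n m
  have hn1 : (1 : ℝ) ≤ 2 * (m : ℝ) + 1 := by linarith [(by positivity : (0:ℝ) ≤ m)]
  have h2 : ‖(2 * (m : ℂ) + 1) ^ 2 + B‖ ≤ (2 * (m : ℝ) + 1) ^ 2 + ‖B‖ :=
    (norm_add_le _ _).trans (by rw [norm_pow, hN])
  have h3 : ‖(1 + 2 * x) * (2 * (m : ℂ) + 1) - e / (2 * (m : ℂ) + 1)‖ ≤
      (‖1 + 2 * x‖ + ‖e‖) * (2 * (m : ℝ) + 1) := by
    refine (norm_sub_le _ _).trans ?_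
    rw [norm_mul, hN]
    nlinarith [norm_e_div e m, norm_nonneg e]
  have h4 := pow_le_pow_left₀ (norm_nonneg _) h2 2
  have h5 := pow_le_pow_left₀ (norm_nonneg _) h3 2
  refine (norm_sub_le _ _).trans ?_
  refine (add_le_add le_rfl (norm_sub_le _ _)).trans ?_
  rw [norm_pow, norm_pow, norm_mul, Complex.norm_ofNat]
  set n : ℝ := 2 * (m : ℝ) + 1
  have hn2 : 1 ≤ n ^ 2 := one_le_pow₀ hn1
  nlinarith [mul_le_mul_of_nonneg_left hn2 (sq_nonneg ‖B‖),
    mul_le_mul_of_nonneg_left hn2 (norm_nonneg lam)]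

lemma ev_real (s C K L : ℝ) (hs : 0 < s) : ∀ᶠ n : ℝ in atTop,
    K ≤ (n ^ 2 + (1 + 2 * s) * n - C) * (n - 1) - (n ^ 2 - (1 + 2 * s) * n + C) * (n + 1) ∧
    n ^ 2 / 2 ≤ n ^ 2 + (1 + 2 * s) * n - C - L ∧
    (n ^ 4 + C * n ^ 2) * (n + 1) ≤ (n - 1 - 2 * s) * (n ^ 2 + (1 + 2 * s) * n - C - L) ^ 2 := by
  have key : ∀ f : ℝ → ℝ, Continuous f → 0 < f 0 → ∀ᶠ n : ℝ in atTop, 0 < f (n⁻¹) := by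
    intro f hf h0
    have := (hf.tendsto 0).comp tendsto_inv_atTop_zero
    exact this.eventually (lt_mem_nhds h0)
  have k1 := key (fun t => 4 * s - 2 * C * t - K * t ^ 2) (by fun_prop) (by simpa using hs)
  have k2 := key (fun t => 1 / 2 + (1 + 2 * s) * t - (C + L) * t ^ 2) (by fun_prop) (by norm_num)
  have k3 := key (fun t => 2 * s - ((1 + 2 * s) ^ 2 + 2 * (C + L) + C) * t
    - ((1 + 2 * s) ^ 3 + C) * t ^ 2 + ((C + L) ^ 2 + 2 * (1 + 2 * s) ^ 2 * (C + L)) * t ^ 3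
    - (1 + 2 * s) * (C + L) ^ 2 * t ^ 4) (by fun_prop) (by simpa using hs)
  filter_upwards [k1, k2, k3, eventually_gt_atTop 0] with n h1 h2 h3 hn
  refine ⟨?_, ?_, ?_⟩
  · have := mul_pos (pow_pos hn 2) h1
    field_simp at this
    nlinarith
  · have := mul_pos (pow_pos hn 2) h2
    field_simp at this
    nlinarith
  · have h4 := mul_pos (pow_pos hn 4) h3
    have h5 : n ^ 4 * (2 * s - ((1 + 2 * s) ^ 2 + 2 * (C + L) + C) * n⁻¹
    - ((1 + 2 * s) ^ 3 + C) * n⁻¹ ^ 2 + ((C + L) ^ 2 + 2 * (1 + 2 * s) ^ 2 * (C + L)) * n⁻¹ ^ 3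
    - (1 + 2 * s) * (C + L) ^ 2 * n⁻¹ ^ 4) = (n - 1 - 2 * s) * (n ^ 2 + (1 + 2 * s) * n - C - L) ^ 2
      - (n ^ 4 + C * n ^ 2) * (n + 1) := by
      field_simp
      ring
    linarith

lemma ev_all (x B e lam : ℂ) (hx : 0 < x.re) (K L : ℝ) : ∃ M : ℕ, 1 ≤ M ∧ ∀ m : ℕ, M ≤ m →
    K ≤ 4 * ‖dS x B e m‖ * (2 * m) - 4 * ‖rS x B e m‖ * (2 * m + 2) ∧
    (m : ℝ) ^ 2 / 2 ≤ ‖dS x B e m‖ - L ∧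
    ‖lam - dS x B e m * rS x B e m‖ ≤ (‖dS x B e m‖ - L) ^ 2 * (1 - (1 + x.re) / (m + 1)) := by
  obtain ⟨C0, hC0, hC⟩ := a_upper x B e lam
  set C := C0 + 4 * x.im ^ 2 + ‖B‖ + ‖e‖ with hCdef
  have hCa : C0 ≤ C := by rw [hCdef]; nlinarith [norm_nonneg B, norm_nonneg e, sq_nonneg x.im]
  have hCb : ‖B‖ + ‖e‖ ≤ C := by rw [hCdef]; nlinarith [norm_nonneg B, norm_nonneg e, sq_nonneg x.im]
  have hCc : 4 * x.im ^ 2 + ‖B‖ + ‖e‖ ≤ C := by linarith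
  have ht : Tendsto (fun m : ℕ => 2 * (m : ℝ) + 1) atTop atTop :=
    tendsto_atTop_add_const_right _ _ (tendsto_natCast_atTop_atTop.const_mul_atTop (by norm_num))
  have hev := (ht.eventually (ev_real x.re C K (4 * L) hx)).and
    ((ht.eventually_ge_atTop (2 * (1 + 2 * x.re))).and (eventually_ge_atTop 1))
  obtain ⟨M, hM⟩ := eventually_atTop.1 hev
  refine ⟨max M 1, le_max_right _ _, fun m hm => ?_⟩
  obtain ⟨⟨e1, e2, e3⟩, e4, e5⟩ := hM m ((le_max_left _ _).trans hm)
  have hd := d_lower x B e m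
  have hr := r_upper x B e hx m e4
  have ha := hC m
  have hm1 : (1 : ℝ) ≤ m := by exact_mod_cast e5
  set d := ‖dS x B e m‖
  set r := ‖rS x B e m‖
  set av := ‖lam - dS x B e m * rS x B e m‖
  set n : ℝ := 2 * (m : ℝ) + 1 with hn
  have hd' : n ^ 2 + (1 + 2 * x.re) * n - C ≤ 4 * d := by linarith
  have hr' : 4 * r ≤ n ^ 2 - (1 + 2 * x.re) * n + C := by linarith
  refine ⟨?_, ?_, ?_⟩
  · rw [show 2 * (m : ℝ) = n - 1 by rw [hn]; ring, show n - 1 + 2 = n + 1 by ring]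
    have p1 := mul_le_mul_of_nonneg_right hd' (by linarith : 0 ≤ n - 1)
    have p2 := mul_le_mul_of_nonneg_right hr' (by linarith : 0 ≤ n + 1)
    linarith
  · have : (m : ℝ) ^ 2 ≤ n ^ 2 / 4 := by rw [hn]; nlinarith
    linarith
  · have hq : 0 ≤ n ^ 2 + (1 + 2 * x.re) * n - C - 4 * L := le_trans (by positivity) e2
    have p1 : (n ^ 2 + (1 + 2 * x.re) * n - C - 4 * L) ^ 2 ≤ (4 * (d - L)) ^ 2 :=
      pow_le_pow_left₀ hq (by linarith) 2
    have p2 : (1 - (1 + x.re) / (m + 1)) = (n - 1 - 2 * x.re) / (n + 1) := by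
      rw [hn]; field_simp; ring
    rw [p2, ← mul_div_assoc, le_div_iff₀ (by linarith)]
    have hn0 : 0 ≤ n - 1 - 2 * x.re := by linarith
    have p3 := mul_le_mul_of_nonneg_left p1 hn0
    have p4 : (n ^ 4 + C0 * n ^ 2) ≤ n ^ 4 + C * n ^ 2 := by gcongr
    have p5 := mul_le_mul_of_nonneg_right (ha.trans p4) (by linarith : 0 ≤ n + 1)
    linarith

lemma disc_step (x d r lam K0 : ℂ) (hx : x ≠ 0) (m : ℕ) (hm : 1 ≤ m) (D G : ℂ)
    (hK0 : (m : ℂ) * d - (m + 1) * r - 2 * x * m * (m + 1) = K0 / 8)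
    (hE : 2 * ‖K0‖ + 18 * (‖lam‖ / ‖x‖) ≤ 4 * ‖d‖ * (2 * m) - 4 * ‖r‖ * (2 * m + 2))
    (hD : ‖2 * x * m * D - G‖ ≤ ‖G‖ / 2) :
    ‖2 * x * ((m + 1 : ℕ) : ℂ) * (G + r * D) - (d * G + lam * D)‖ ≤ ‖d * G + lam * D‖ / 2 ∧
    (‖d‖ - ‖lam‖ / ‖x‖) * ‖G‖ ≤ ‖d * G + lam * D‖ := by
  have hX : 0 < ‖x‖ := norm_pos_iff.2 hx
  have hm1 : (1 : ℝ) ≤ m := by exact_mod_cast hm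
  have hm0 : (m : ℂ) ≠ 0 := by exact_mod_cast (by omega : m ≠ 0)
  set Y := 2 * x * m * D with hY
  have hDY : lam * D * m = lam / x * Y / 2 := by rw [hY]; field_simp
  have hYn : ‖Y‖ ≤ 3 / 2 * ‖G‖ := by
    have := norm_add_le (Y - G) G
    rw [sub_add_cancel] at this
    linarith
  have hlY : ‖lam / x * Y / 2‖ ≤ 3 / 4 * (‖lam‖ / ‖x‖) * ‖G‖ := by
    rw [norm_div, norm_mul, norm_div, Complex.norm_ofNat]
    have := mul_le_mul_of_nonneg_left hYn (by positivity : 0 ≤ ‖lam‖ / ‖x‖)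
    linarith
  set Q := d * G + lam * D with hQ
  have hQm : (m : ℂ) * Q = m * d * G + lam / x * Y / 2 := by rw [hQ, ← hDY]; ring
  have hQn : (m * ‖d‖ - 3 / 4 * (‖lam‖ / ‖x‖)) * ‖G‖ ≤ m * ‖Q‖ := by
    have h1 : (m : ℝ) * ‖Q‖ = ‖(m : ℂ) * Q‖ := by simp
    have h2 := norm_sub_le_norm_add ((m : ℂ) * d * G) (lam / x * Y / 2)
    rw [h1, hQm]
    have h3 : ‖(m : ℂ) * d * G‖ = m * ‖d‖ * ‖G‖ := by simp
    rw [h3] at h2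
    linarith
  have hL0 : 0 ≤ ‖lam‖ / ‖x‖ := by positivity
  have hG0 := norm_nonneg G
  constructor
  · have e1 : (m : ℂ) * (2 * x * ((m + 1 : ℕ) : ℂ) * (G + r * D) - Q) =
        (m + 1) * r * (Y - G) - lam / x * Y / 2 - G * (K0 / 8) := by
      rw [mul_sub, hQm, hY, ← hK0]; push_cast; ring
    have e2 : ‖(m : ℂ) * (2 * x * ((m + 1 : ℕ) : ℂ) * (G + r * D) - Q)‖ ≤
        ((m + 1) * ‖r‖ / 2 + 3 / 4 * (‖lam‖ / ‖x‖) + ‖K0‖ / 8) * ‖G‖ := by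
      rw [e1]
      refine (norm_sub_le _ _).trans ?_
      refine (add_le_add (norm_sub_le _ _) le_rfl).trans ?_
      have h1 : ‖((m : ℂ) + 1) * r * (Y - G)‖ ≤ (m + 1) * ‖r‖ * (‖G‖ / 2) := by
        rw [norm_mul, norm_mul]
        have : ‖(m : ℂ) + 1‖ = m + 1 := by
          have h := Complex.norm_natCast (m + 1)
          push_cast at h
          exact h
        rw [this]
        gcongr
      have h2 : ‖G * (K0 / 8)‖ = ‖K0‖ / 8 * ‖G‖ := by
        rw [norm_mul, norm_div, Complex.norm_ofNat]; ring
      rw [h2]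
      linarith
    rw [norm_mul, Complex.norm_natCast] at e2
    have e3 := mul_le_mul_of_nonneg_right hE hG0
    have e4 : (m : ℝ) * ‖2 * x * ((m + 1 : ℕ) : ℂ) * (G + r * D) - Q‖ ≤ m * (‖Q‖ / 2) := by
      linarith
    exact le_of_mul_le_mul_left e4 (by linarith)
  · have : (m : ℝ) * ((‖d‖ - ‖lam‖ / ‖x‖) * ‖G‖) ≤ m * ‖Q‖ := by
      refine le_trans ?_ hQn
      have h3 : 3 / 4 * (‖lam‖ / ‖x‖) ≤ m * (‖lam‖ / ‖x‖) := by nlinarith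
      have := mul_le_mul_of_nonneg_right h3 hG0
      linarith
    exact le_of_mul_le_mul_left this (by linarith)

lemma K0_eq (x B e : ℂ) (m : ℕ) : (m : ℂ) * dS x B e m - (m + 1) * rS x B e m
    - 2 * x * m * (m + 1) = (4 * x - 2 * B - 2 * e) / 8 := by
  have := n_ne m
  unfold dS rS
  obtain ⟨u, hu⟩ : ∃ u, u = e / (2 * (m : ℂ) + 1) := ⟨_, rfl⟩
  have he : e = u * (2 * (m : ℂ) + 1) := by rw [hu]; field_simp
  rw [← hu, he]
  ring

/-- The limit of solutions relative to a dominant solution. -/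
lemma lim_of_sol (x B e lam : ℂ) (hx : 0 < x.re) (M : ℕ) (hM1 : 1 ≤ M)
    (hM : ∀ m : ℕ, M ≤ m →
      2 * ‖4 * x - 2 * B - 2 * e‖ + 18 * (‖lam‖ / ‖x‖) ≤
        4 * ‖dS x B e m‖ * (2 * m) - 4 * ‖rS x B e m‖ * (2 * m + 2) ∧
      (m : ℝ) ^ 2 / 2 ≤ ‖dS x B e m‖ - ‖lam‖ / ‖x‖ ∧
      ‖lam - dS x B e m * rS x B e m‖ ≤
        (‖dS x B e m‖ - ‖lam‖ / ‖x‖) ^ 2 * (1 - (1 + x.re) / (m + 1)))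
    (D : ℕ → ℂ)
    (hDrec : ∀ m, D (m + 2) = (dS x B e m + rS x B e (m + 1)) * D (m + 1) +
      (lam - dS x B e m * rS x B e m) * D m)
    (hG0 : D (M + 1) - rS x B e M * D M ≠ 0)
    (hD0 : ‖2 * x * M * D M - (D (M + 1) - rS x B e M * D M)‖ ≤
      ‖D (M + 1) - rS x B e M * D M‖ / 2) :
    (∀ᶠ m in atTop, D m ≠ 0) ∧ (∀ᶠ m in atTop, D (m + 1) - rS x B e m * D m ≠ 0) ∧
    ∀ F : ℕ → ℂ, (∀ m, F (m + 2) = (dS x B e m + rS x B e (m + 1)) * F (m + 1) +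
      (lam - dS x B e m * rS x B e m) * F m) →
      ∃ c : ℂ, Tendsto (fun m => F m / D m) atTop (nhds c) ∧
        Tendsto (fun m => (F (m + 1) - rS x B e m * F m) / (D (m + 1) - rS x B e m * D m))
          atTop (nhds c) := by
  have hx0 : x ≠ 0 := by rintro rfl; simp at hx
  have hX : 0 < ‖x‖ := norm_pos_iff.2 hx0
  set d := dS x B e with hd
  set r := rS x B e with hr
  set L := ‖lam‖ / ‖x‖ with hL
  set G : ℕ → ℂ := fun m => D (m + 1) - r m * D m with hG
  have hD1 : ∀ m, D (m + 1) = G m + r m * D m := fun m => by simp [hG]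
  have hG1 : ∀ m, G (m + 1) = d m * G m + lam * D m := fun m => by
    simp only [hG]; rw [hDrec]; ring
  have step : ∀ m, M ≤ m → ‖2 * x * m * D m - G m‖ ≤ ‖G m‖ / 2 →
      ‖2 * x * ((m + 1 : ℕ) : ℂ) * D (m + 1) - G (m + 1)‖ ≤ ‖G (m + 1)‖ / 2 ∧
      (‖d m‖ - L) * ‖G m‖ ≤ ‖G (m + 1)‖ := by
    intro m hm h
    have := disc_step x (d m) (r m) lam (4 * x - 2 * B - 2 * e) hx0 m (hM1.trans hm) (D m) (G m)
      (K0_eq x B e m) (hM m hm).1 h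
    rw [hD1, hG1]
    exact this
  have hdL : ∀ m, M ≤ m → 0 < ‖d m‖ - L := fun m hm => by
    have h1 : (1 : ℝ) ≤ m := by exact_mod_cast hM1.trans hm
    have := (hM m hm).2.1
    nlinarith
  have inv : ∀ m, M ≤ m → G m ≠ 0 ∧ ‖2 * x * m * D m - G m‖ ≤ ‖G m‖ / 2 := by
    intro m hm
    induction m, hm using Nat.le_induction with
    | base => exact ⟨hG0, hD0⟩
    | succ m hm ih =>
      obtain ⟨s1, s2⟩ := step m hm ih.2
      refine ⟨?_, s1⟩
      have := mul_pos (hdL m hm) (norm_pos_iff.2 ih.1)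
      exact norm_pos_iff.1 (this.trans_le s2)
  have hGs : ∀ m, M ≤ m → (‖d m‖ - L) * ‖G m‖ ≤ ‖G (m + 1)‖ := fun m hm =>
    (step m hm (inv m hm).2).2
  have hDn : ∀ m, M ≤ m → ‖G m‖ ≤ 4 * ‖x‖ * m * ‖D m‖ := by
    intro m hm
    have h1 := (inv m hm).2
    have h2 := norm_sub_norm_le (G m) (2 * x * m * D m)
    rw [norm_sub_rev (G m) (2 * x * m * D m)] at h2
    have h3 : ‖2 * x * m * D m‖ = 2 * ‖x‖ * m * ‖D m‖ := by simp
    rw [h3] at h2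
    linarith
  have hDne : ∀ m, M ≤ m → D m ≠ 0 := by
    intro m hm h
    have := hDn m hm
    rw [h, norm_zero, mul_zero] at this
    exact (inv m hm).1 (norm_le_zero_iff.1 this)
  refine ⟨eventually_atTop.2 ⟨M, hDne⟩, eventually_atTop.2 ⟨M, fun m hm => (inv m hm).1⟩, ?_⟩
  intro F hF
  set W : ℕ → ℂ := fun m => F (m + 1) * D m - F m * D (m + 1) with hW
  have hW1 : ∀ m, W (m + 1) = -(lam - d m * r m) * W m := fun m => by
    simp only [hW]; rw [hDrec, hF]; ring
  set V : ℕ → ℝ := fun m => ‖W m‖ / ‖G m‖ ^ 2 with hV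
  have hVn : ∀ m, 0 ≤ V m := fun m => by positivity
  have hs1 : 0 < 1 + x.re := by linarith
  have hV1 : ∀ m, M ≤ m → V (m + 1) * ((m + 1 : ℕ) : ℝ) ^ (1 + x.re) ≤ V m * (m : ℝ) ^ (1 + x.re) := by
    intro m hm
    have hm1 : (1 : ℝ) ≤ m := by exact_mod_cast hM1.trans hm
    have hGp := norm_pos_iff.2 (inv m hm).1
    have hGp1 := norm_pos_iff.2 (inv (m + 1) (by omega)).1
    have h1 : V (m + 1) ≤ V m * (1 - (1 + x.re) / (m + 1)) := by
      simp only [hV]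
      rw [hW1, norm_mul, norm_neg, div_le_iff₀ (by positivity)]
      have h2 := (hM m hm).2.2
      have h3 : ((‖d m‖ - L) * ‖G m‖) ^ 2 ≤ ‖G (m + 1)‖ ^ 2 :=
        pow_le_pow_left₀ (mul_nonneg (hdL m hm).le hGp.le) (hGs m hm) 2
      have hq : 0 ≤ 1 - (1 + x.re) / ((m : ℝ) + 1) := by
        by_contra hneg
        push Not at hneg
        have h4 : 0 < (‖d m‖ - L) ^ 2 := pow_pos (hdL m hm) 2
        have := mul_neg_of_pos_of_neg h4 hneg
        linarith [norm_nonneg (lam - d m * r m)]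
      calc ‖lam - d m * r m‖ * ‖W m‖ ≤ (‖d m‖ - L) ^ 2 * (1 - (1 + x.re) / (m + 1)) * ‖W m‖ :=
            mul_le_mul_of_nonneg_right h2 (norm_nonneg _)
        _ = ‖W m‖ / ‖G m‖ ^ 2 * (1 - (1 + x.re) / (m + 1)) * ((‖d m‖ - L) * ‖G m‖) ^ 2 := by
            field_simp
        _ ≤ _ := by
            apply mul_le_mul_of_nonneg_left h3
            positivity
    have h2 : 1 - (1 + x.re) / ((m : ℝ) + 1) ≤ ((m : ℝ) / (m + 1)) ^ (1 + x.re) := by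
      have h := one_add_mul_self_le_rpow_one_add (s := -1 / ((m : ℝ) + 1)) (p := 1 + x.re)
        (by rw [le_div_iff₀ (by linarith)]; linarith) (by linarith)
      have e1 : 1 + -1 / ((m : ℝ) + 1) = m / (m + 1) := by field_simp; ring
      rw [e1] at h
      refine le_trans (le_of_eq ?_) h
      ring
    have h3 : ((m : ℝ) / (m + 1)) ^ (1 + x.re) * ((m + 1 : ℕ) : ℝ) ^ (1 + x.re) =
        (m : ℝ) ^ (1 + x.re) := by
      rw [← Real.mul_rpow (by positivity) (by positivity)]
      congr 1
      push_cast
      field_simp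
    calc V (m + 1) * ((m + 1 : ℕ) : ℝ) ^ (1 + x.re)
        ≤ V m * ((m : ℝ) / (m + 1)) ^ (1 + x.re) * ((m + 1 : ℕ) : ℝ) ^ (1 + x.re) := by
          apply mul_le_mul_of_nonneg_right _ (by positivity)
          exact h1.trans (mul_le_mul_of_nonneg_left h2 (hVn m))
      _ = _ := by rw [mul_assoc, h3]
  set C := V M * (M : ℝ) ^ (1 + x.re) with hC
  have hC0 : 0 ≤ C := by positivity
  have hVC : ∀ m, M ≤ m → V m ≤ C * (m : ℝ) ^ (-(1 + x.re)) := by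
    intro m hm
    have hm1 : (1 : ℝ) ≤ m := by exact_mod_cast hM1.trans hm
    have : V m * (m : ℝ) ^ (1 + x.re) ≤ C := by
      induction m, hm using Nat.le_induction with
      | base => exact le_rfl
      | succ m hm ih => exact (hV1 m hm).trans (ih (by exact_mod_cast hM1.trans hm))
    rw [Real.rpow_neg (by positivity), ← div_eq_mul_inv, le_div_iff₀ (by positivity)]
    exact this
  have hdiff : ∀ m, M ≤ m → ‖F (m + 1) / D (m + 1) - F m / D m‖ ≤ 64 * ‖x‖ ^ 2 * V m := by
    intro m hm
    have hm1 : (1 : ℝ) ≤ m := by exact_mod_cast hM1.trans hm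
    have n1 := hDne m hm
    have n2 := hDne (m + 1) (by omega)
    have hGp := norm_pos_iff.2 (inv m hm).1
    have e1 : F (m + 1) / D (m + 1) - F m / D m = W m / (D (m + 1) * D m) := by
      rw [div_sub_div _ _ n2 n1]; simp only [hW]; ring
    rw [e1, norm_div, norm_mul]
    simp only [hV]
    have p1 := norm_pos_iff.2 n1
    have p2 := norm_pos_iff.2 n2
    have g1 := hDn m hm
    have g2 := hDn (m + 1) (by omega)
    have g3 := hGs m hm
    have g4 := mul_le_mul_of_nonneg_right (hM m hm).2.1 hGp.le
    push_cast at g2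
    have g5 : (m : ℝ) ^ 2 / 2 * ‖G m‖ ≤ 4 * ‖x‖ * (m + 1) * ‖D (m + 1)‖ := by linarith
    have g5' : (m : ℝ) ^ 2 / 2 * ‖G m‖ ≤ 4 * ‖x‖ * (2 * m) * ‖D (m + 1)‖ := by
      refine g5.trans ?_
      gcongr
      linarith
    have g6 : (m : ℝ) * ‖G m‖ ≤ 16 * ‖x‖ * ‖D (m + 1)‖ := by
      have : (m : ℝ) * (m * ‖G m‖) ≤ m * (16 * ‖x‖ * ‖D (m + 1)‖) := by linarith
      exact le_of_mul_le_mul_left this (by linarith)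
    have g7 : ‖G m‖ ^ 2 ≤ 64 * ‖x‖ ^ 2 * (‖D (m + 1)‖ * ‖D m‖) := by
      have h1 : ‖G m‖ * (m * ‖G m‖) ≤ (4 * ‖x‖ * m * ‖D m‖) * (16 * ‖x‖ * ‖D (m + 1)‖) :=
        mul_le_mul g1 g6 (by positivity) (by positivity)
      have : (m : ℝ) * ‖G m‖ ^ 2 ≤ m * (64 * ‖x‖ ^ 2 * (‖D (m + 1)‖ * ‖D m‖)) := by linarith
      exact le_of_mul_le_mul_left this (by linarith)
    rw [← mul_div_assoc, div_le_div_iff₀ (by positivity) (by positivity)]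
    have := mul_le_mul_of_nonneg_left g7 (norm_nonneg (W m))
    linarith
  have hsum : Summable (fun k : ℕ => 64 * ‖x‖ ^ 2 * (C * ((k + M : ℕ) : ℝ) ^ (-(1 + x.re)))) := by
    apply Summable.mul_left
    apply Summable.mul_left
    exact (summable_nat_add_iff (f := fun k : ℕ => (k : ℝ) ^ (-(1 + x.re))) M).2
      (Real.summable_nat_rpow.2 (by linarith))
  have hcau : CauchySeq (fun k : ℕ => F (k + M) / D (k + M)) := by
    refine cauchySeq_of_dist_le_of_summable _ (fun k => ?_) hsum
    rw [dist_comm, dist_eq_norm, Nat.succ_eq_add_one, show k + 1 + M = k + M + 1 by ring]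
    refine (hdiff (k + M) (by omega)).trans ?_
    gcongr
    exact hVC (k + M) (by omega)
  obtain ⟨c, hc⟩ := cauchySeq_tendsto_of_complete hcau
  have hc' : Tendsto (fun m => F m / D m) atTop (nhds c) :=
    (tendsto_add_atTop_iff_nat (f := fun m => F m / D m) M).1 hc
  refine ⟨c, hc', ?_⟩
  have hz : Tendsto (fun m : ℕ => W m / (D m * G m)) atTop (nhds 0) := by
    have hb : Tendsto (fun m : ℕ => 4 * ‖x‖ * C * (m : ℝ) ^ (-x.re)) atTop (nhds 0) := by
      have := ((tendsto_rpow_neg_atTop hx).comp tendsto_natCast_atTop_atTop).const_mul (4 * ‖x‖ * C)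
      simpa using this
    refine squeeze_zero_norm' ?_ hb
    filter_upwards [eventually_ge_atTop M] with m hm
    have hm1 : (1 : ℝ) ≤ m := by exact_mod_cast hM1.trans hm
    have p1 := norm_pos_iff.2 (hDne m hm)
    have hGp := norm_pos_iff.2 (inv m hm).1
    have h1 : ‖W m / (D m * G m)‖ ≤ 4 * ‖x‖ * m * V m := by
      rw [norm_div, norm_mul]
      simp only [hV]
      rw [← mul_div_assoc, div_le_div_iff₀ (by positivity) (by positivity)]
      have := mul_le_mul_of_nonneg_left (hDn m hm) (mul_nonneg (norm_nonneg (W m)) hGp.le)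
      linarith
    have h2 : (m : ℝ) ^ (-x.re) = m * (m : ℝ) ^ (-(1 + x.re)) := by
      rw [show -x.re = 1 + -(1 + x.re) by ring, Real.rpow_add (by linarith), Real.rpow_one]
    rw [h2]
    refine h1.trans ?_
    have := mul_le_mul_of_nonneg_left (hVC m hm) (by positivity : 0 ≤ 4 * ‖x‖ * m)
    linarith
  have := hc'.add hz
  rw [add_zero] at this
  refine this.congr' ?_
  filter_upwards [eventually_ge_atTop M] with m hm
  have n1 := hDne m hm
  have n2 := (inv m hm).1
  change F m / D m + W m / (D m * G m) = (F (m + 1) - r m * F m) / G m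
  rw [div_add_div _ _ n1 (mul_ne_zero n1 n2), div_eq_div_iff (by positivity) n2]
  simp only [hW]
  rw [hD1]
  ring

def Pt (a b : ℕ → ℂ) (u v : ℂ) : Prop :=
  ∃ D : ℕ → ℂ, (∀ᶠ m in atTop, D m ≠ 0) ∧ Tendsto (fun m => cfA a b m / D m) atTop (nhds u) ∧
    Tendsto (fun m => cfB a b m / D m) atTop (nhds v)

lemma Pt.scale {a b : ℕ → ℂ} {u v : ℂ} (h : Pt a b u v) (t : ℂ) (ht : t ≠ 0) :
    Pt a b (t * u) (t * v) := by
  obtain ⟨D, h0, h1, h2⟩ := h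
  refine ⟨fun m => D m / t, ?_, ?_, ?_⟩
  · filter_upwards [h0] with m hm using div_ne_zero hm ht
  · refine (h1.const_mul t).congr fun m => ?_
    rw [div_div_eq_mul_div]; ring
  · refine (h2.const_mul t).congr fun m => ?_
    rw [div_div_eq_mul_div]; ring

lemma Pt.cross {a b : ℕ → ℂ} {u v u' v' : ℂ} (h : Pt a b u v) (h' : Pt a b u' v') :
    u * v' = u' * v := by
  obtain ⟨D, h0, h1, h2⟩ := h
  obtain ⟨D', h0', h1', h2'⟩ := h'
  refine tendsto_nhds_unique (h1.mul h2') ((h1'.mul h2).congr fun m => ?_)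
  ring

lemma Pt.unique {a b : ℕ → ℂ} {u v u' v' : ℂ} (h : Pt a b u v) (h' : Pt a b u' v')
    (hn : u ≠ 0 ∨ v ≠ 0) (hn' : u' ≠ 0 ∨ v' ≠ 0) : ∃ t : ℂ, t ≠ 0 ∧ u = t * u' ∧ v = t * v' := by
  have hc := h.cross h'
  by_cases hu : u' = 0
  · have hv : v' ≠ 0 := by tauto
    rw [hu, zero_mul] at hc
    have hu0 : u = 0 := by simpa [hv] using hc
    have hv0 : v ≠ 0 := by tauto
    exact ⟨v / v', div_ne_zero hv0 hv, by simp [hu, hu0], by field_simp⟩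
  · have hu0 : u ≠ 0 := by
      intro h0
      rw [h0, zero_mul] at hc
      have : v = 0 := by simpa [hu] using hc.symm
      tauto
    refine ⟨u / u', div_ne_zero hu0 hu, by field_simp, ?_⟩
    field_simp
    rw [hc]; ring

lemma cas (a b : ℕ → ℂ) (hane : ∀ m, a (m + 1) ≠ 0) (m : ℕ) :
    cfA a b m * cfB a b (m + 1) - cfA a b (m + 1) * cfB a b m ≠ 0 := by
  induction m with
  | zero => simp [cfA, cfB]
  | succ m ih =>
    have : cfA a b (m + 1) * cfB a b (m + 2) - cfA a b (m + 2) * cfB a b (m + 1) =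
        -a (m + 1) * (cfA a b m * cfB a b (m + 1) - cfA a b (m + 1) * cfB a b m) := by
      simp only [cfA, cfB]; ring
    rw [this]
    exact mul_ne_zero (neg_ne_zero.2 (hane m)) ih

lemma core (x B e lam : ℂ) (hx : 0 < x.re) (a b b' : ℕ → ℂ) (hlam : lam ≠ 0)
    (hb : ∀ m, b (m + 1) = dS x B e m + rS x B e (m + 1))
    (hb0 : b 0 = rS x B e 0)
    (hb' : ∀ m, b' (m + 1) = dS x B e (m + 1) + rS x B e m)
    (hb0' : b' 0 = dS x B e 0)
    (ha : ∀ m, a (m + 1) = lam - dS x B e m * rS x B e m) (hane : ∀ m, a (m + 1) ≠ 0) :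
    ∃ u v : ℂ, (u ≠ 0 ∨ v ≠ 0) ∧ Pt a b u v ∧ Pt a b' v (u / lam) := by
  have hx0 : x ≠ 0 := by rintro rfl; simp at hx
  obtain ⟨M, hM1, hM⟩ := ev_all x B e lam hx (2 * ‖4 * x - 2 * B - 2 * e‖ + 18 * (‖lam‖ / ‖x‖))
    (‖lam‖ / ‖x‖)
  have hM0 : (M : ℂ) ≠ 0 := by exact_mod_cast (by omega : M ≠ 0)
  have hA : ∀ m, cfA a b (m + 2) = (dS x B e m + rS x B e (m + 1)) * cfA a b (m + 1) +
      (lam - dS x B e m * rS x B e m) * cfA a b m := fun m => by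
    rw [← hb, ← ha]; rfl
  have hB : ∀ m, cfB a b (m + 2) = (dS x B e m + rS x B e (m + 1)) * cfB a b (m + 1) +
      (lam - dS x B e m * rS x B e m) * cfB a b m := fun m => by
    rw [← hb, ← ha]; rfl
  have hdet := cas a b hane M
  set Δ := cfA a b M * cfB a b (M + 1) - cfA a b (M + 1) * cfB a b M with hΔ
  set U := 1 / (2 * x * M) with hU
  set Z := 1 + rS x B e M * U with hZ
  set p := (U * cfB a b (M + 1) - Z * cfB a b M) / Δ with hp
  set q := (Z * cfA a b M - U * cfA a b (M + 1)) / Δ with hq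
  set D : ℕ → ℂ := fun m => p * cfA a b m + q * cfB a b m with hD
  have hDM : D M = U := by
    simp only [hD, hp, hq]
    field_simp
    rw [hΔ]; ring
  have hDM1 : D (M + 1) = Z := by
    simp only [hD, hp, hq]
    field_simp
    rw [hΔ]; ring
  have hDrec : ∀ m, D (m + 2) = (dS x B e m + rS x B e (m + 1)) * D (m + 1) +
      (lam - dS x B e m * rS x B e m) * D m := fun m => by
    simp only [hD]; rw [hA, hB]; ring
  have hG1 : D (M + 1) - rS x B e M * D M = 1 := by rw [hDM, hDM1, hZ]; ring
  obtain ⟨k1, k2, k3⟩ := lim_of_sol x B e lam hx M hM1 hM D hDrec (by rw [hG1]; exact one_ne_zero)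
    (by
      rw [hG1, hDM, hU]
      have : 2 * x * M * (1 / (2 * x * M)) = 1 := by field_simp
      rw [this]; simp)
  obtain ⟨u, hu1, hu2⟩ := k3 _ hA
  obtain ⟨v, hv1, hv2⟩ := k3 _ hB
  have hA' : ∀ m, cfA a b' m = cfB a b (m + 1) - rS x B e m * cfB a b m ∧
      cfA a b' (m + 1) = cfB a b (m + 2) - rS x B e (m + 1) * cfB a b (m + 1) := by
    intro m
    induction m with
    | zero => constructor <;> simp [cfA, cfB, hb0', hb]
    | succ m ih =>
      refine ⟨ih.2, ?_⟩
      have : cfA a b' (m + 1 + 1) = b' (m + 1) * cfA a b' (m + 1) + a (m + 1) * cfA a b' m := rfl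
      rw [this, ih.1, ih.2, hB, hB, hB, hb', ha]
      ring
  have hB' : ∀ m, lam * cfB a b' m = cfA a b (m + 1) - rS x B e m * cfA a b m ∧
      lam * cfB a b' (m + 1) = cfA a b (m + 2) - rS x B e (m + 1) * cfA a b (m + 1) := by
    intro m
    induction m with
    | zero => constructor
              · simp [cfA, cfB, hb0]
              · simp [cfA, cfB, hb, hb0, ha]; ring
    | succ m ih =>
      refine ⟨ih.2, ?_⟩
      have : cfB a b' (m + 1 + 1) = b' (m + 1) * cfB a b' (m + 1) + a (m + 1) * cfB a b' m := rfl
      rw [this, mul_add, mul_left_comm, mul_left_comm lam, ih.1, ih.2, hA, hA, hA, hb', ha]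
      ring
  refine ⟨u, v, ?_, ⟨D, k1, hu1, hv1⟩, ⟨fun m => D (m + 1) - rS x B e m * D m, k2, ?_, ?_⟩⟩
  · by_contra hcon
    push Not at hcon
    have h1 := (hu1.const_mul p).add (hv1.const_mul q)
    rw [hcon.1, hcon.2] at h1
    have h2 : Tendsto (fun m => p * (cfA a b m / D m) + q * (cfB a b m / D m)) atTop (nhds 1) := by
      refine tendsto_const_nhds.congr' ?_
      filter_upwards [k1] with m hm
      rw [← mul_div_assoc, ← mul_div_assoc, ← add_div, eq_comm]
      exact div_self hm
    have := tendsto_nhds_unique h1 h2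
    simp at this
  · refine hv2.congr fun m => ?_
    rw [(hA' m).1]
  · refine (hu2.div_const lam).congr fun m => ?_
    rw [← (hB' m).1]
    field_simp

lemma step (x B e lam : ℂ) (hx : 0 < x.re) (a b b' : ℕ → ℂ) (hlam : lam ≠ 0)
    (hb : ∀ m, b (m + 1) = dS x B e m + rS x B e (m + 1))
    (hb0 : b 0 = rS x B e 0)
    (hb' : ∀ m, b' (m + 1) = dS x B e (m + 1) + rS x B e m)
    (hb0' : b' 0 = dS x B e 0)
    (ha : ∀ m, a (m + 1) = lam - dS x B e m * rS x B e m) (hane : ∀ m, a (m + 1) ≠ 0)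
    (u v : ℂ) (hn : u ≠ 0 ∨ v ≠ 0) (h : Pt a b u v) : Pt a b' v (u / lam) := by
  obtain ⟨u', v', hn', h1, h2⟩ := core x B e lam hx a b b' hlam hb hb0 hb' hb0' ha hane
  obtain ⟨t, ht, rfl, rfl⟩ := h.unique h1 hn hn'
  rw [mul_div_assoc]
  exact h2.scale t ht

lemma large (a b : ℕ → ℂ) (ha : ∀ m : ℕ, ‖a (m + 1)‖ ≤ ((m : ℝ) + 1 / 2) ^ 4)
    (hb : ∀ m : ℕ, 2 * ((m : ℝ) + 1) ^ 2 + 1 / 2 ≤ ‖b (m + 1)‖) (m : ℕ) :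
    ‖cfA a b (m + 1) - b 0 * cfB a b (m + 1)‖ ≤ ‖cfB a b (m + 1)‖ := by
  have hB : ∀ m : ℕ, cfB a b (m + 1) ≠ 0 ∧
      ((m : ℝ) + 1 / 2) ^ 2 * ‖cfB a b m‖ ≤ ‖cfB a b (m + 1)‖ := by
    intro m
    induction m with
    | zero => simp [cfB]
    | succ m ih =>
      have h1 : cfB a b (m + 1 + 1) = b (m + 1) * cfB a b (m + 1) + a (m + 1) * cfB a b m := rfl
      have h2 := norm_sub_le_norm_add (b (m + 1) * cfB a b (m + 1)) (a (m + 1) * cfB a b m)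
      rw [← h1, norm_mul, norm_mul] at h2
      have h3 := mul_le_mul_of_nonneg_right (ha m) (norm_nonneg (cfB a b m))
      have h4 := mul_le_mul_of_nonneg_right (hb m) (norm_nonneg (cfB a b (m + 1)))
      have h5 := mul_le_mul_of_nonneg_left ih.2 (sq_nonneg ((m : ℝ) + 1 / 2))
      have h6 : (((m + 1 : ℕ) : ℝ) + 1 / 2) ^ 2 * ‖cfB a b (m + 1)‖ ≤ ‖cfB a b (m + 1 + 1)‖ := by
        push_cast
        linarith
      refine ⟨?_, h6⟩
      have h7 := norm_pos_iff.2 ih.1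
      exact norm_pos_iff.1 (lt_of_lt_of_le (by positivity) h6)
  have hW : ∀ m : ℕ, ‖cfA a b (m + 2) * cfB a b (m + 1) - cfA a b (m + 1) * cfB a b (m + 2)‖ ≤
      ‖cfB a b (m + 1)‖ ^ 2 / 16 := by
    intro m
    induction m with
    | zero =>
      have := ha 0
      simp [cfA, cfB] at *
      rw [mul_comm, add_sub_cancel_left]
      norm_num at this ⊢
      linarith
    | succ m ih =>
      have e1 : cfA a b (m + 1 + 2) * cfB a b (m + 1 + 1) - cfA a b (m + 1 + 1) * cfB a b (m + 1 + 2)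
        = -a (m + 2) * (cfA a b (m + 2) * cfB a b (m + 1) - cfA a b (m + 1) * cfB a b (m + 2)) := by
        have h1 : cfB a b (m + 1 + 2) = b (m + 2) * cfB a b (m + 2) + a (m + 2) * cfB a b (m + 1) := rfl
        have h2 : cfA a b (m + 1 + 2) = b (m + 2) * cfA a b (m + 2) + a (m + 2) * cfA a b (m + 1) := rfl
        rw [h1, h2]; ring
      rw [e1, norm_mul, norm_neg]
      have h1 := ha (m + 1)
      have h2 := (hB (m + 1)).2
      have h3 := pow_le_pow_left₀ (by positivity) h2 2
      have h4 := mul_le_mul h1 ih (norm_nonneg _) (by positivity)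
      refine h4.trans ?_
      rw [show m + 1 + 1 = m + 2 from rfl] at *
      linarith
  have hd : ∀ m : ℕ, ‖cfA a b (m + 1) / cfB a b (m + 1) - b 0‖ ≤ 1 - 1 / ((m : ℝ) + 1) := by
    intro m
    induction m with
    | zero => simp [cfA, cfB]
    | succ m ih =>
      have n1 := (hB m).1
      have n2 := (hB (m + 1)).1
      have p1 := norm_pos_iff.2 n1
      have p2 := norm_pos_iff.2 n2
      have e1 : ‖cfA a b (m + 2) / cfB a b (m + 2) - cfA a b (m + 1) / cfB a b (m + 1)‖ ≤
          1 / (((m : ℝ) + 1) * (m + 2)) := by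
        rw [div_sub_div _ _ n2 n1, norm_div, norm_mul, mul_comm (cfB a b (m + 1 + 1))]
        have h1 := hW m
        have h2 := (hB (m + 1)).2
        push_cast at h2
        have h3 : (((m : ℝ) + 1) * (m + 2)) ≤ ((m : ℝ) + 1 + 1 / 2) ^ 2 := by nlinarith
        rw [div_le_div_iff₀ (by positivity) (by positivity)]
        have h4 := mul_le_mul_of_nonneg_right (h2) p1.le
        have h5 := mul_le_mul_of_nonneg_right h3 (sq_nonneg ‖cfB a b (m + 1)‖)
        have h6 := mul_le_mul_of_nonneg_right h1 (by positivity : 0 ≤ ((m : ℝ) + 1) * (m + 2))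
        have h7 : 0 ≤ ‖cfB a b (m + 1)‖ ^ 2 * (((m : ℝ) + 1) * (m + 2)) := by positivity
        linarith
      have e2 : 1 - 1 / (((m + 1 : ℕ) : ℝ) + 1) = (1 - 1 / ((m : ℝ) + 1)) + 1 / (((m : ℝ) + 1) * (m + 2)) := by
        push_cast; field_simp; ring
      rw [e2]
      have := norm_add_le (cfA a b (m + 1) / cfB a b (m + 1) - b 0)
        (cfA a b (m + 2) / cfB a b (m + 2) - cfA a b (m + 1) / cfB a b (m + 1))
      rw [show cfA a b (m + 1) / cfB a b (m + 1) - b 0 + (cfA a b (m + 2) / cfB a b (m + 2) -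
        cfA a b (m + 1) / cfB a b (m + 1)) = cfA a b (m + 2) / cfB a b (m + 2) - b 0 by ring] at this
      rw [show m + 1 + 1 = m + 2 from rfl]
      linarith
  have h1 := hd m
  have n1 := (hB m).1
  have h2 : cfA a b (m + 1) - b 0 * cfB a b (m + 1) =
      (cfA a b (m + 1) / cfB a b (m + 1) - b 0) * cfB a b (m + 1) := by field_simp
  rw [h2, norm_mul]
  have h3 : (0 : ℝ) ≤ 1 / ((m : ℝ) + 1) := by positivity
  exact mul_le_of_le_one_left (norm_nonneg _) (by linarith)

lemma large_Pt (a b : ℕ → ℂ) (ha : ∀ m : ℕ, ‖a (m + 1)‖ ≤ ((m : ℝ) + 1 / 2) ^ 4)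
    (hb : ∀ m : ℕ, 2 * ((m : ℝ) + 1) ^ 2 + 1 / 2 ≤ ‖b (m + 1)‖) (u v : ℂ) (h : Pt a b u v) :
    ‖u - b 0 * v‖ ≤ ‖v‖ := by
  obtain ⟨D, h0, h1, h2⟩ := h
  refine le_of_tendsto_of_tendsto ((h1.sub (h2.const_mul (b 0))).norm) h2.norm ?_
  filter_upwards [h0, eventually_ge_atTop 1] with m hm hm1
  obtain ⟨k, rfl⟩ : ∃ k, m = k + 1 := ⟨m - 1, by omega⟩
  have := large a b ha hb k
  rw [← mul_div_assoc, ← sub_div, norm_div, norm_div]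
  gcongr

noncomputable def bG (e2 e3 x : ℂ) : ℕ → ℂ := fun m =>
  if m = 0 then (x ^ 2 + (e2 / 2 + e3 / 2)) / 2 else
    x ^ 2 + ((4 * (m : ℂ) ^ 2 + e2) / 2 - e3 / (2 * (2 * (m : ℂ) - 1) * (2 * (m : ℂ) + 1)))

noncomputable def bP (e2 x : ℂ) : ℂ := e2 + 2 * x ^ 2 + 2 * x

lemma n3_ne (m : ℕ) : (2 * (m : ℂ) + 3) ≠ 0 := by exact_mod_cast (by omega : 2 * m + 3 ≠ 0)

lemma bG_succ (e2 e3 x : ℂ) (m : ℕ) :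
    bG e2 e3 x (m + 1) = dS x (bP e2 x) e3 m + rS x (bP e2 x) e3 (m + 1) := by
  have h1 := n_ne m
  have h3 := n3_ne m
  have h3' : 2 * ((m : ℂ) + 1) + 1 ≠ 0 := by convert h3 using 1; ring
  have h1' : 2 * ((m : ℂ) + 1) - 1 ≠ 0 := by convert h1 using 1; ring
  simp only [bG, dS, rS, bP, Nat.succ_ne_zero, if_false]
  push_cast
  have key : e3 / (2 * (2 * ((m : ℂ) + 1) - 1) * (2 * ((m : ℂ) + 1) + 1)) =
      (e3 / (2 * (m : ℂ) + 1) - e3 / (2 * ((m : ℂ) + 1) + 1)) / 4 := by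
    rw [div_sub_div _ _ h1 h3', div_div, div_eq_div_iff (by simp [h1', h3']) (by simp [h1, h3'])]
    ring
  rw [key]
  ring

lemma bG_zero (e2 e3 x : ℂ) : bG e2 e3 x 0 = rS x (bP e2 x) e3 0 := by
  simp [bG, rS, bP]; ring

lemma bG'_succ (e2 e3 x : ℂ) (m : ℕ) :
    bG e2 (-e3) (x + 1) (m + 1) = dS x (bP e2 x) e3 (m + 1) + rS x (bP e2 x) e3 m := by
  have h1 := n_ne m
  have h3 := n3_ne m
  have h3' : 2 * ((m : ℂ) + 1) + 1 ≠ 0 := by convert h3 using 1; ring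
  have h1' : 2 * ((m : ℂ) + 1) - 1 ≠ 0 := by convert h1 using 1; ring
  simp only [bG, dS, rS, bP, Nat.succ_ne_zero, if_false]
  push_cast
  have key : -e3 / (2 * (2 * ((m : ℂ) + 1) - 1) * (2 * ((m : ℂ) + 1) + 1)) =
      -(e3 / (2 * (m : ℂ) + 1) - e3 / (2 * ((m : ℂ) + 1) + 1)) / 4 := by
    rw [div_sub_div _ _ h1 h3', neg_div, neg_div, div_div, neg_inj,
      div_eq_div_iff (by simp [h1', h3']) (by simp [h1, h3'])]
    ring
  rw [key]
  ring

lemma bG'_zero (e2 e3 x : ℂ) : bG e2 (-e3) (x + 1) 0 = dS x (bP e2 x) e3 0 := by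
  simp [bG, dS, bP]; ring

noncomputable def E2 (α β : ℝ) : ℂ := (α : ℂ) + β - (α : ℂ) ^ 2 - (β : ℂ) ^ 2 - (α : ℂ) * β
noncomputable def E3 (α β : ℝ) : ℂ := (α : ℂ) * β * (1 - α - β)

lemma bSeq_eq (α β : ℝ) (x : ℂ) : bSeq α β x = bG (E2 α β) (E3 α β) x := by
  funext m
  unfold bSeq bG qSeq E2 E3
  split_ifs with h
  · simp; ring
  · ring

noncomputable def lamP (α β : ℝ) (x : ℂ) : ℂ :=
  (x + 1) * ((x + α) * (x + β) * (x + 1 - α - β)) / 4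

noncomputable def lamM (α β : ℝ) (x : ℂ) : ℂ :=
  x * ((x + 1 - α) * (x + 1 - β) * (x + α + β)) / 4

lemma aSeq_P (α β : ℝ) (x : ℂ) (m : ℕ) : aSeq α β (m + 1) = lamP α β x -
    dS x (bP (E2 α β) x) (E3 α β) m * rS x (bP (E2 α β) x) (E3 α β) m := by
  have h1 := n_ne m
  have h1' : 2 * ((m : ℂ) + 1) - 1 = 2 * (m : ℂ) + 1 := by ring
  unfold aSeq lamP dS rS bP E2 E3
  push_cast
  rw [h1', show 2 * ((m : ℂ) + 1) = (2 * (m : ℂ) + 1) + 1 by ring]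
  generalize 2 * (m : ℂ) + 1 = n at *
  field_simp
  ring

lemma aSeq_M (α β : ℝ) (x : ℂ) (m : ℕ) : aSeq α β (m + 1) = lamM α β x -
    dS x (bP (E2 α β) x) (-E3 α β) m * rS x (bP (E2 α β) x) (-E3 α β) m := by
  have h1 := n_ne m
  have h1' : 2 * ((m : ℂ) + 1) - 1 = 2 * (m : ℂ) + 1 := by ring
  unfold aSeq lamM dS rS bP E2 E3
  push_cast
  rw [h1', show 2 * ((m : ℂ) + 1) = (2 * (m : ℂ) + 1) + 1 by ring]
  generalize 2 * (m : ℂ) + 1 = n at *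
  field_simp
  ring

lemma aSeq_real (α β : ℝ) (m : ℕ) : aSeq α β (m + 1) =
    ((-(((2 * (m : ℝ) + 1) ^ 2 - (1 - α - β) ^ 2) * ((2 * (m : ℝ) + 1) ^ 2 - α ^ 2) *
      ((2 * (m : ℝ) + 1) ^ 2 - β ^ 2)) / (16 * (2 * (m : ℝ) + 1) ^ 2) : ℝ) : ℂ) := by
  unfold aSeq
  push_cast
  congr 1 <;> ring

lemma aSeq_bounds (α β : ℝ) (hα0 : 0 < α) (hα1 : α < 1) (hβ0 : 0 < β) (hβ1 : β < 1) (m : ℕ) :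
    aSeq α β (m + 1) ≠ 0 ∧ ‖aSeq α β (m + 1)‖ ≤ ((m : ℝ) + 1 / 2) ^ 4 := by
  rw [aSeq_real]
  have hm : (0 : ℝ) ≤ m := by positivity
  set n : ℝ := 2 * (m : ℝ) + 1 with hn
  have hn1 : 1 ≤ n ^ 2 := by rw [hn]; nlinarith
  have a1 : 0 < n ^ 2 - α ^ 2 := by nlinarith
  have a2 : 0 < n ^ 2 - β ^ 2 := by nlinarith
  have a3 : 0 < n ^ 2 - (1 - α - β) ^ 2 := by nlinarith
  have hnp : 0 < n := by linarith
  constructor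
  · rw [Complex.ofReal_ne_zero]
    exact div_ne_zero (neg_ne_zero.2 (by positivity)) (by positivity)
  · rw [Complex.norm_real, neg_div, norm_neg, Real.norm_of_nonneg (by positivity),
      div_le_iff₀ (by positivity)]
    have e1 : ((m : ℝ) + 1 / 2) ^ 4 * (16 * n ^ 2) = n ^ 2 * n ^ 2 * n ^ 2 := by rw [hn]; ring
    rw [e1]
    have b1 : n ^ 2 - α ^ 2 ≤ n ^ 2 := by nlinarith
    have b2 : n ^ 2 - β ^ 2 ≤ n ^ 2 := by nlinarith
    have b3 : n ^ 2 - (1 - α - β) ^ 2 ≤ n ^ 2 := by nlinarith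
    gcongr

lemma step2 (α β : ℝ) (hα0 : 0 < α) (hα1 : α < 1) (hβ0 : 0 < β) (hβ1 : β < 1) (x : ℂ)
    (hx : 0 < x.re) (hP : lamP α β x ≠ 0) (hQ : lamM α β (x + 1) ≠ 0) (u v : ℂ)
    (hn : u ≠ 0 ∨ v ≠ 0) (h : Pt (aSeq α β) (bG (E2 α β) (E3 α β) x) u v) :
    Pt (aSeq α β) (bG (E2 α β) (E3 α β) (x + 2)) (lamM α β (x + 1) / lamP α β x * u) v := by
  have hane := fun m => (aSeq_bounds α β hα0 hα1 hβ0 hβ1 m).1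
  have s1 := step x (bP (E2 α β) x) (E3 α β) (lamP α β x) hx _ _ _ hP (bG_succ _ _ _)
    (bG_zero _ _ _) (bG'_succ _ _ _) (bG'_zero _ _ _) (aSeq_P α β x) hane u v hn h
  have hn2 : v ≠ 0 ∨ u / lamP α β x ≠ 0 := by
    rcases hn with h | h
    · exact Or.inr (div_ne_zero h hP)
    · exact Or.inl h
  have s2 := step (x + 1) (bP (E2 α β) (x + 1)) (-E3 α β) (lamM α β (x + 1))
    (by simp; linarith) _ _ _ hQ (bG_succ _ _ _)
    (bG_zero _ _ _) (bG'_succ _ _ _) (bG'_zero _ _ _) (aSeq_M α β (x + 1)) hane _ _ hn2 s1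
  have s3 := s2.scale _ hQ
  rw [neg_neg, show x + 1 + 1 = x + 2 by ring] at s3
  convert s3 using 1
  · ring
  · field_simp

lemma bG_norm (e2 e3 : ℂ) (x : ℂ) (hx : 1 / 2 + ‖e2‖ + ‖e3‖ ≤ (x ^ 2).re) (m : ℕ) :
    2 * ((m : ℝ) + 1) ^ 2 + 1 / 2 ≤ ‖bG e2 e3 x (m + 1)‖ := by
  have hm : (0 : ℝ) ≤ m := by positivity
  have e1 : bG e2 e3 x (m + 1) = (x ^ 2 + ((2 * ((m : ℝ) + 1) ^ 2 : ℝ) : ℂ)) +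
      (e2 / 2 - e3 / ((2 * (2 * (m : ℝ) + 1) * (2 * (m : ℝ) + 3) : ℝ) : ℂ)) := by
    simp only [bG, Nat.succ_ne_zero, if_false]
    push_cast
    rw [show 2 * ((m : ℂ) + 1) - 1 = 2 * (m : ℂ) + 1 by ring,
      show 2 * ((m : ℂ) + 1) + 1 = 2 * (m : ℂ) + 3 by ring]
    ring
  have e2' : ‖e2 / 2 - e3 / ((2 * (2 * (m : ℝ) + 1) * (2 * (m : ℝ) + 3) : ℝ) : ℂ)‖ ≤ ‖e2‖ + ‖e3‖ := by
    refine (norm_sub_le _ _).trans ?_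
    have h1 : ‖e2 / 2‖ ≤ ‖e2‖ := by
      rw [norm_div, Complex.norm_ofNat]; linarith [norm_nonneg e2]
    have h2 : ‖e3 / ((2 * (2 * (m : ℝ) + 1) * (2 * (m : ℝ) + 3) : ℝ) : ℂ)‖ ≤ ‖e3‖ := by
      rw [norm_div, Complex.norm_real, Real.norm_of_nonneg (by positivity)]
      apply div_le_self (norm_nonneg _)
      nlinarith
    linarith
  have h3 := norm_sub_le_norm_add (x ^ 2 + ((2 * ((m : ℝ) + 1) ^ 2 : ℝ) : ℂ))
    (e2 / 2 - e3 / ((2 * (2 * (m : ℝ) + 1) * (2 * (m : ℝ) + 3) : ℝ) : ℂ))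
  rw [← e1] at h3
  have h4 := Complex.re_le_norm (x ^ 2 + ((2 * ((m : ℝ) + 1) ^ 2 : ℝ) : ℂ))
  rw [Complex.add_re, Complex.ofReal_re] at h4
  linarith

lemma gs_ratio (s t : ℂ) (hs : ∀ j : ℕ, s + j ≠ 0) (ht : ∀ j : ℕ, t + j ≠ 0) (n : ℕ)
    (hn : n ≠ 0) : ∏ j ∈ Finset.range (n + 1), ((t + j) / (s + j)) =
    Complex.GammaSeq s n / Complex.GammaSeq t n * (n : ℂ) ^ (t - s) := by
  have hn' : (n : ℂ) ≠ 0 := by exact_mod_cast hn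
  have hf : ((n.factorial : ℕ) : ℂ) ≠ 0 := by exact_mod_cast n.factorial_ne_zero
  have p1 : ∏ j ∈ Finset.range (n + 1), (s + j) ≠ 0 := Finset.prod_ne_zero_iff.2 fun j _ => hs j
  have p2 : ∏ j ∈ Finset.range (n + 1), (t + j) ≠ 0 := Finset.prod_ne_zero_iff.2 fun j _ => ht j
  have q1 : (n : ℂ) ^ s ≠ 0 := by simp [Complex.cpow_eq_zero_iff, hn']
  have q2 : (n : ℂ) ^ t ≠ 0 := by simp [Complex.cpow_eq_zero_iff, hn']
  rw [Finset.prod_div_distrib, Complex.GammaSeq, Complex.GammaSeq, Complex.cpow_sub _ _ hn']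
  field_simp

end CFProof

open CFProof in
theorem stmt3 (α β : ℝ) (hα0 : 0 < α) (hα1 : α < 1) (hβ0 : 0 < β) (hβ1 : β < 1)
    (x : ℂ) (hx : 0 < x.re)
    (h1 : ∀ n : ℕ, (x + α) / 2 ≠ -(n : ℂ))
    (h2 : ∀ n : ℕ, (x - α - β + 1) / 2 ≠ -(n : ℂ))
    (h3 : ∀ n : ℕ, (x + β) / 2 ≠ -(n : ℂ))
    (h4 : ∀ n : ℕ, (x - α + 2) / 2 ≠ -(n : ℂ))
    (h5 : ∀ n : ℕ, (x + α + β + 1) / 2 ≠ -(n : ℂ))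
    (h6 : ∀ n : ℕ, (x - β + 2) / 2 ≠ -(n : ℂ)) :
    ∃ v : ℂ, v ≠ 0 ∧ CFConvergesTo (aSeq α β) (bSeq α β x) v ∧
      Complex.Gamma ((x + α) / 2) * Complex.Gamma ((x - α - β + 1) / 2) *
          Complex.Gamma ((x + β) / 2) /
        (Complex.Gamma ((x - α + 2) / 2) * Complex.Gamma ((x + α + β + 1) / 2) *
          Complex.Gamma ((x - β + 2) / 2)) = 2 / v := by
  set s1 := (x + α) / 2 with hs1
  set s2 := (x - α - β + 1) / 2 with hs2
  set s3 := (x + β) / 2 with hs3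
  set t1 := (x - α + 2) / 2 with ht1
  set t2 := (x + α + β + 1) / 2 with ht2
  set t3 := (x - β + 2) / 2 with ht3
  have ns1 : ∀ j : ℕ, s1 + j ≠ 0 := fun j h => h1 j (eq_neg_of_add_eq_zero_left h)
  have ns2 : ∀ j : ℕ, s2 + j ≠ 0 := fun j h => h2 j (eq_neg_of_add_eq_zero_left h)
  have ns3 : ∀ j : ℕ, s3 + j ≠ 0 := fun j h => h3 j (eq_neg_of_add_eq_zero_left h)
  have nt1 : ∀ j : ℕ, t1 + j ≠ 0 := fun j h => h4 j (eq_neg_of_add_eq_zero_left h)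
  have nt2 : ∀ j : ℕ, t2 + j ≠ 0 := fun j h => h5 j (eq_neg_of_add_eq_zero_left h)
  have nt3 : ∀ j : ℕ, t3 + j ≠ 0 := fun j h => h6 j (eq_neg_of_add_eq_zero_left h)
  have hre : ∀ j : ℕ, 0 < (x + 2 * j).re := fun j => by
    have : (x + 2 * (j : ℂ)).re = x.re + 2 * j := by simp
    rw [this]; positivity
  have hne1 : ∀ j : ℕ, x + 2 * j + 1 ≠ 0 := fun j h => by
    have := congrArg Complex.re h
    rw [Complex.add_re] at this
    simp only [Complex.one_re, Complex.zero_re] at this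
    linarith [hre j]
  have hP : ∀ j : ℕ, lamP α β (x + 2 * j) =
      2 * (x + 2 * j + 1) * ((s1 + j) * (s2 + j) * (s3 + j)) := fun j => by
    unfold lamP; rw [hs1, hs2, hs3]; ring
  have hQ : ∀ j : ℕ, lamM α β (x + 2 * j + 1) =
      2 * (x + 2 * j + 1) * ((t1 + j) * (t2 + j) * (t3 + j)) := fun j => by
    unfold lamM; rw [ht1, ht2, ht3]; ring
  have hP0 : ∀ j : ℕ, lamP α β (x + 2 * j) ≠ 0 := fun j => by
    rw [hP]
    exact mul_ne_zero (mul_ne_zero two_ne_zero (hne1 j))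
      (mul_ne_zero (mul_ne_zero (ns1 j) (ns2 j)) (ns3 j))
  have hQ0 : ∀ j : ℕ, lamM α β (x + 2 * j + 1) ≠ 0 := fun j => by
    rw [hQ]
    exact mul_ne_zero (mul_ne_zero two_ne_zero (hne1 j))
      (mul_ne_zero (mul_ne_zero (nt1 j) (nt2 j)) (nt3 j))
  set T : ℕ → ℂ := fun j => (t1 + j) / (s1 + j) * ((t2 + j) / (s2 + j)) * ((t3 + j) / (s3 + j))
    with hT
  have hT0 : ∀ j, T j ≠ 0 := fun j =>
    mul_ne_zero (mul_ne_zero (div_ne_zero (nt1 j) (ns1 j)) (div_ne_zero (nt2 j) (ns2 j)))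
      (div_ne_zero (nt3 j) (ns3 j))
  have hTr : ∀ j : ℕ, lamM α β (x + 2 * j + 1) / lamP α β (x + 2 * j) = T j := fun j => by
    rw [hP, hQ, hT, mul_div_mul_left _ _ (mul_ne_zero two_ne_zero (hne1 j))]
    simp only [mul_div_mul_comm]
  have hPi0 : ∀ k, ∏ j ∈ Finset.range k, T j ≠ 0 := fun k =>
    Finset.prod_ne_zero_iff.2 fun j _ => hT0 j
  have hane := fun m => (aSeq_bounds α β hα0 hα1 hβ0 hβ1 m).1
  obtain ⟨u, v, hn, huv, -⟩ := core x (bP (E2 α β) x) (E3 α β) (lamP α β x) hx _ _ _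
    (by simpa using hP0 0) (bG_succ _ _ _)
    (bG_zero _ _ _) (bG'_succ _ _ _) (bG'_zero _ _ _) (aSeq_P α β x) hane
  have hchain : ∀ k : ℕ, Pt (aSeq α β) (bG (E2 α β) (E3 α β) (x + 2 * k))
      ((∏ j ∈ Finset.range k, T j) * u) v := by
    intro k
    induction k with
    | zero => simpa using huv
    | succ k ih =>
      have hn' : (∏ j ∈ Finset.range k, T j) * u ≠ 0 ∨ v ≠ 0 := by
        rcases hn with h | h
        · exact Or.inl (mul_ne_zero (hPi0 k) h)
        · exact Or.inr h
      have := step2 α β hα0 hα1 hβ0 hβ1 (x + 2 * k) (hre k) (hP0 k) (hQ0 k) _ _ hn' ih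
      rw [hTr] at this
      rw [Finset.prod_range_succ]
      convert this using 1
      · push_cast; ring_nf
      · ring
  have hlarge : ∀ᶠ k : ℕ in atTop, ‖(∏ j ∈ Finset.range k, T j) * u -
      bG (E2 α β) (E3 α β) (x + 2 * k) 0 * v‖ ≤ ‖v‖ := by
    have ht : Tendsto (fun k : ℕ => (k : ℝ)) atTop atTop := tendsto_natCast_atTop_atTop
    filter_upwards [ht.eventually_ge_atTop (1 / 2 + ‖E2 α β‖ + ‖E3 α β‖ + x.im ^ 2),
      eventually_ge_atTop 1] with k hk hk1
    refine large_Pt _ _ (fun m => (aSeq_bounds α β hα0 hα1 hβ0 hβ1 m).2)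
      (bG_norm _ _ _ ?_) _ _ (hchain k)
    have hk1' : (1 : ℝ) ≤ k := by exact_mod_cast hk1
    have : ((x + 2 * (k : ℂ)) ^ 2).re = (x.re + 2 * k) ^ 2 - x.im ^ 2 := by
      rw [pow_two, Complex.mul_re]; simp; ring
    rw [this]
    nlinarith
  have hv : v ≠ 0 := by
    intro hv
    obtain ⟨k, hk⟩ := hlarge.exists
    rw [hv, mul_zero, sub_zero, norm_zero] at hk
    have := norm_le_zero_iff.1 hk
    have hu : u = 0 := by simpa [hPi0 k] using this
    tauto
  obtain ⟨D, hD0, hDA, hDB⟩ := huv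
  have hB0 : ∀ᶠ m in atTop, cfB (aSeq α β) (bG (E2 α β) (E3 α β) x) m ≠ 0 := by
    filter_upwards [hDB.eventually_ne hv] with m hm h
    rw [h, zero_div] at hm
    exact hm rfl
  have hlim : Tendsto (fun m => cfA (aSeq α β) (bG (E2 α β) (E3 α β) x) m /
      cfB (aSeq α β) (bG (E2 α β) (E3 α β) x) m) atTop (nhds (u / v)) := by
    refine (hDA.div hDB hv).congr' ?_
    filter_upwards [hD0] with m hm
    exact div_div_div_cancel_right₀ hm _ _
  -- the Gamma quotient
  set Gq := Complex.Gamma s1 * Complex.Gamma s2 * Complex.Gamma s3 /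
    (Complex.Gamma t1 * Complex.Gamma t2 * Complex.Gamma t3) with hGq
  have hGt : Complex.Gamma t1 * Complex.Gamma t2 * Complex.Gamma t3 ≠ 0 :=
    mul_ne_zero (mul_ne_zero (Complex.Gamma_ne_zero h4) (Complex.Gamma_ne_zero h5))
      (Complex.Gamma_ne_zero h6)
  have hL1 : Tendsto (fun n : ℕ => (∏ j ∈ Finset.range (n + 1), T j) / (n : ℂ) ^ 2) atTop
      (nhds Gq) := by
    have g := fun s => Complex.GammaSeq_tendsto_Gamma s
    have := (((g s1).mul (g s2)).mul (g s3)).div (((g t1).mul (g t2)).mul (g t3)) hGt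
    refine this.congr' ?_
    filter_upwards [eventually_ne_atTop 0] with n hn0
    have hn' : (n : ℂ) ≠ 0 := by exact_mod_cast hn0
    simp only [hT]
    rw [Finset.prod_mul_distrib, Finset.prod_mul_distrib, gs_ratio s1 t1 ns1 nt1 n hn0,
      gs_ratio s2 t2 ns2 nt2 n hn0, gs_ratio s3 t3 ns3 nt3 n hn0]
    have hpow : (n : ℂ) ^ (t1 - s1) * (n : ℂ) ^ (t2 - s2) * (n : ℂ) ^ (t3 - s3) = (n : ℂ) ^ 2 := by
      rw [← Complex.cpow_add _ _ hn', ← Complex.cpow_add _ _ hn', ← Complex.cpow_natCast]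
      congr 1
      rw [hs1, hs2, hs3, ht1, ht2, ht3]; push_cast; ring
    rw [eq_div_iff (pow_ne_zero 2 hn'), ← hpow]
    simp only [Pi.mul_apply, Pi.div_apply, div_eq_mul_inv, mul_inv]
    ring
  have hinv : Tendsto (fun n : ℕ => ((n : ℂ))⁻¹) atTop (nhds 0) := tendsto_inv_atTop_nhds_zero_nat
  have hL2 : Tendsto (fun n : ℕ => bG (E2 α β) (E3 α β) (x + 2 * ((n + 1 : ℕ) : ℂ)) 0 / (n : ℂ) ^ 2)
      atTop (nhds 2) := by
    have hc : Continuous (fun t : ℂ => (((x + 2) * t + 2) ^ 2 +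
      (E2 α β / 2 + E3 α β / 2) * t ^ 2) / 2) := by fun_prop
    have := (hc.tendsto 0).comp hinv
    have e0 : (((x + 2) * 0 + 2) ^ 2 + (E2 α β / 2 + E3 α β / 2) * 0 ^ 2) / 2 = (2 : ℂ) := by
      norm_num
    rw [e0] at this
    refine this.congr' ?_
    filter_upwards [eventually_ne_atTop 0] with n hn0
    have hn' : (n : ℂ) ≠ 0 := by exact_mod_cast hn0
    simp only [bG, Function.comp, if_true]
    push_cast
    field_simp
    ring
  have hL3 : Tendsto (fun n : ℕ => ((∏ j ∈ Finset.range (n + 1), T j) * u -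
      bG (E2 α β) (E3 α β) (x + 2 * ((n + 1 : ℕ) : ℂ)) 0 * v) / (n : ℂ) ^ 2) atTop
      (nhds 0) := by
    have hb : Tendsto (fun n : ℕ => ‖v‖ * ‖((n : ℂ))⁻¹ ^ 2‖) atTop (nhds 0) := by
      have := ((hinv.pow 2).norm).const_mul ‖v‖
      simpa using this
    refine squeeze_zero_norm' ?_ hb
    filter_upwards [(tendsto_add_atTop_nat 1).eventually hlarge] with n hn
    rw [div_eq_mul_inv, norm_mul, ← inv_pow]
    exact mul_le_mul_of_nonneg_right hn (norm_nonneg _)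
  have hfin : Gq * u - 2 * v = 0 := by
    refine tendsto_nhds_unique (((hL1.mul_const u).sub (hL2.mul_const v))) (hL3.congr fun n => ?_)
    ring
  have hGu : Gq * u = 2 * v := sub_eq_zero.1 hfin
  have hu : u ≠ 0 := by
    intro h
    rw [h, mul_zero] at hGu
    exact mul_ne_zero two_ne_zero hv hGu.symm
  refine ⟨u / v, div_ne_zero hu hv, ?_, ?_⟩
  · rw [bSeq_eq]
    exact ⟨hB0, hlim⟩
  · rw [div_div_eq_mul_div, eq_div_iff hu]
    exact hGu
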